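/- arXiv:2102.10924 — 5 statements merged into one kernel-verified Lean document; each statement's English description precedes it below -/
import Mathlib

section
/- Let κ be a closed gauge on E, let α > 0, and let κ_α(z) = inf_{u ∈ E} max{κ(u), (1/α)·‖z − u‖} be its polar envelope. Then for every z ∈ E, κ(z) = 0 if and only if κ_α(z) = 0. -/
/-! The point `u = z` shows that `κ z = 0` forces the envelope to vanish. Conversely, a vanishing
envelope yields points `u` arbitrarily close to `z` with `κ u` arbitrarily small, so lower
semicontinuity gives `κ z = 0`. -/

open scoped ENNReal RealInnerProductSpace Pointwise Topology
open Filter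

noncomputable section

variable {X : Type*} [NormedAddCommGroup X] [InnerProductSpace ℝ X] [FiniteDimensional ℝ X]

/-- The point `(x, t)` of the lifted space `E = X ×₂ ℝ` (Euclidean product). -/
def pt (x : X) (t : ℝ) : WithLp 2 (X × ℝ) := (WithLp.equiv 2 (X × ℝ)).symm (x, t)

/-- First (`X`-) coordinate of a point of the lifted space. -/
def fstE (z : WithLp 2 (X × ℝ)) : X := (WithLp.equiv 2 (X × ℝ) z).1

/-- Second (`ℝ`-) coordinate of a point of the lifted space. -/
def sndE (z : WithLp 2 (X × ℝ)) : ℝ := (WithLp.equiv 2 (X × ℝ) z).2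

/-- Orthogonal projection `P_S` onto the affine subspace `S = X × {1}`. -/
def PS (z : WithLp 2 (X × ℝ)) : WithLp 2 (X × ℝ) := pt (fstE z) 1

/-- A closed gauge: a convex, lower semicontinuous, positively homogeneous
function `κ : E → [0,∞]` on the lifted space. -/
def IsClosedGauge (κ : WithLp 2 (X × ℝ) → ℝ≥0∞) : Prop :=
  LowerSemicontinuous κ ∧
  (∀ z w : WithLp 2 (X × ℝ), ∀ a b : ℝ, 0 ≤ a → 0 ≤ b → a + b = 1 →
    κ (a • z + b • w) ≤ ENNReal.ofReal a * κ z + ENNReal.ofReal b * κ w) ∧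
  (∀ t : ℝ, 0 ≤ t → ∀ z, κ (t • z) = ENNReal.ofReal t * κ z)

/-- The objective `u ↦ max {κ(u), ‖z − u‖}` defining the polar proximal map. -/
def polarObj (κ : WithLp 2 (X × ℝ) → ℝ≥0∞) (z u : WithLp 2 (X × ℝ)) : ℝ≥0∞ :=
  max (κ u) (ENNReal.ofReal ‖z - u‖)

/-- `T` is the polar proximal map of `κ`: for every `z`, `T z` is the unique
minimizer of `u ↦ max {κ(u), ‖z − u‖}`. -/
def IsPolarProx (κ : WithLp 2 (X × ℝ) → ℝ≥0∞)
    (T : WithLp 2 (X × ℝ) → WithLp 2 (X × ℝ)) : Prop :=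
  ∀ z, (∀ u, polarObj κ z (T z) ≤ polarObj κ z u) ∧
    (∀ u, (∀ v, polarObj κ z u ≤ polarObj κ z v) → u = T z)

/-- For a closed gauge `κ` and `α > 0`, with polar envelope
`κ_α(z) = ⨅ u, max {κ(u), (1/α)‖z − u‖}`, one has `κ(z) = 0 ↔ κ_α(z) = 0`. -/
theorem gauge_zero_iff_polarEnvelope_zero
    (κ : WithLp 2 (X × ℝ) → ℝ≥0∞) (hκ : IsClosedGauge κ)
    (α : ℝ) (hα : 0 < α) (z : WithLp 2 (X × ℝ)) :
    κ z = 0 ↔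
      (⨅ u : WithLp 2 (X × ℝ), max (κ u) (ENNReal.ofReal ((1 / α) * ‖z - u‖))) = 0 := by
  constructor
  · intro h
    refine le_antisymm ((iInf_le _ z).trans ?_) bot_le
    simp [h]
  · intro h
    by_contra hz
    -- A positive level `c < κ z` persists on a ball around `z`, by lower semicontinuity.
    obtain ⟨c, hc0, hcz⟩ := exists_between (pos_iff_ne_zero.mpr hz)
    obtain ⟨ε, hε, hball⟩ := Metric.eventually_nhds_iff.mp (hκ.1 z c hcz)
    have hpos : 0 < min c (ENNReal.ofReal ((1 / α) * ε)) :=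
      lt_min hc0 (ENNReal.ofReal_pos.mpr (by positivity))
    rw [← h] at hpos
    obtain ⟨u, hu⟩ := iInf_lt_iff.mp hpos
    obtain ⟨hu₁, hu₂⟩ := max_lt_iff.mp hu
    have hdist := (ENNReal.ofReal_lt_ofReal_iff (by positivity)).mp
      (hu₂.trans_le (min_le_right _ _))
    have hlt : dist u z < ε := by
      rw [dist_comm, dist_eq_norm]
      exact lt_of_mul_lt_mul_left hdist (by positivity)
    exact lt_asymm (hball hlt) (hu₁.trans_le (min_le_left _ _))
end
end

section
/- The polar proximal map T of a closed gauge κ is firmly quasinonexpansive: for every y ∈ E and every x ∈ Fix T (equivalently, every x ∈ E with κ(x) = 0), ‖T y − x‖² + ‖T y − y‖² ≤ ‖y − x‖². -/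
/-!
A fixed point `x` of `T` is a zero of `κ`: otherwise shrinking `x` slightly towards the origin
lowers `κ` while keeping the distance to `x` below `κ x`, so `x` would not minimize its own
objective (`gauge_eq_zero_of_fixed`).

Expanding the square, the claim says that `⟪y - T y, x - T y⟫ ≤ 0` when `κ x = 0`. If this inner
product were positive, then moving from `T y` a little towards `x` would not increase the distance
to `y`, and by convexity would not increase `κ` either. The new point would be a second minimizer,
contradicting uniqueness (`inner_polarProx_nonpos`).
-/

open scoped ENNReal RealInnerProductSpace Pointwise Topology
open Filter

noncomputable section

variable {X : Type*} [NormedAddCommGroup X] [InnerProductSpace ℝ X] [FiniteDimensional ℝ X]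

theorem gauge_eq_zero_of_fixed {κ : WithLp 2 (X × ℝ) → ℝ≥0∞} (hκ : IsClosedGauge κ)
    {T : WithLp 2 (X × ℝ) → WithLp 2 (X × ℝ)} (hT : IsPolarProx κ T)
    {x : WithLp 2 (X × ℝ)} (hx : T x = x) : κ x = 0 := by
  obtain ⟨-, -, hom⟩ := hκ
  have key : ∀ t : ℝ, t ≤ 1 → 0 ≤ t →
      κ x ≤ max (ENNReal.ofReal (1 - t) * κ x) (ENNReal.ofReal (t * ‖x‖)) := by
    intro t ht ht0
    have h := (hT x).1 ((1 - t) • x)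
    have e : x - (1 - t) • x = t • x := by module
    rw [hx, polarObj, polarObj, hom _ (by linarith), e, norm_smul, Real.norm_of_nonneg ht0] at h
    exact (le_max_left _ _).trans h
  -- Comparison with the origin shows that `κ x` is finite.
  have hfin : κ x ≠ ⊤ := by
    have h := key 1 le_rfl zero_le_one
    simp only [sub_self, ENNReal.ofReal_zero, zero_mul] at h
    exact ne_top_of_le_ne_top (by simp) h
  obtain ⟨k, hk⟩ : ∃ k : ℝ, k = (κ x).toReal := ⟨_, rfl⟩
  have hk0 : 0 ≤ k := hk ▸ ENNReal.toReal_nonneg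
  have hkx : κ x = ENNReal.ofReal k := by rw [hk, ENNReal.ofReal_toReal hfin]
  by_contra hne
  have hkpos : 0 < k := by
    rcases hk0.lt_or_eq with h | h
    · exact h
    · exact absurd (by rw [hkx, ← h, ENNReal.ofReal_zero]) hne
  have hn := norm_nonneg x
  have hd : 0 < k + ‖x‖ + 1 := by positivity
  -- This `t ∈ (0, 1)` satisfies `t * ‖x‖ < k`.
  obtain ⟨t, ht⟩ : ∃ t : ℝ, t = k / (k + ‖x‖ + 1) := ⟨_, rfl⟩
  have ht0 : 0 < t := ht ▸ by positivity
  have hte : t * (k + ‖x‖ + 1) = k := by rw [ht]; field_simp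
  have ht1 : t ≤ 1 := by rw [ht, div_le_one hd]; linarith
  have h := key t ht1 ht0.le
  rw [hkx, ← ENNReal.ofReal_mul (by linarith)] at h
  rcases le_max_iff.1 h with h | h
  · rw [ENNReal.ofReal_le_ofReal_iff (mul_nonneg (by linarith) hk0)] at h
    nlinarith [mul_pos ht0 hkpos]
  · rw [ENNReal.ofReal_le_ofReal_iff (by positivity)] at h
    nlinarith [mul_pos ht0 hkpos]

/-- The variational inequality for `T y` against a zero `x` of the gauge. -/
theorem inner_polarProx_nonpos {κ : WithLp 2 (X × ℝ) → ℝ≥0∞} (hκ : IsClosedGauge κ)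
    {T : WithLp 2 (X × ℝ) → WithLp 2 (X × ℝ)} (hT : IsPolarProx κ T)
    {x : WithLp 2 (X × ℝ)} (hx : κ x = 0) (y : WithLp 2 (X × ℝ)) :
    ⟪y - T y, x - T y⟫ ≤ 0 := by
  obtain ⟨-, conv, -⟩ := hκ
  obtain ⟨hmin, huniq⟩ := hT y
  by_contra! hc
  obtain ⟨c, hcdef⟩ : ∃ c : ℝ, c = ⟪y - T y, x - T y⟫ := ⟨_, rfl⟩
  rw [← hcdef] at hc
  have hd : 0 < c + ‖x - T y‖ ^ 2 := by positivity
  -- With this step `s`, the quadratic `-2 s c + s² ‖x - T y‖²` is nonpositive.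
  obtain ⟨s, hs⟩ : ∃ s : ℝ, s = c / (c + ‖x - T y‖ ^ 2) := ⟨_, rfl⟩
  have hs0 : 0 < s := hs ▸ by positivity
  have hse : s * (c + ‖x - T y‖ ^ 2) = c := by rw [hs]; field_simp
  have hs1 : s ≤ 1 := by rw [hs, div_le_one hd]; nlinarith [sq_nonneg ‖x - T y‖]
  have hgauge : κ ((1 - s) • T y + s • x) ≤ κ (T y) := by
    refine (conv (T y) x (1 - s) s (by linarith) hs0.le (by ring)).trans ?_
    rw [hx, mul_zero, add_zero]
    exact mul_le_of_le_one_left' (ENNReal.ofReal_le_one.2 (by linarith))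
  have hdist : ‖y - ((1 - s) • T y + s • x)‖ ≤ ‖y - T y‖ := by
    have e : y - ((1 - s) • T y + s • x) = (y - T y) - s • (x - T y) := by module
    have h2 : ‖(y - T y) - s • (x - T y)‖ ^ 2
        = ‖y - T y‖ ^ 2 - 2 * (s * c) + s ^ 2 * ‖x - T y‖ ^ 2 := by
      rw [norm_sub_sq_real, real_inner_smul_right, norm_smul, mul_pow, Real.norm_eq_abs, sq_abs,
        hcdef]
    rw [e]
    refine (sq_le_sq₀ (norm_nonneg _) (norm_nonneg _)).1 ?_
    rw [h2]
    nlinarith [mul_pos hs0 hc, mul_pos hs0 (mul_pos hs0 hc)]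
  have hu : (1 - s) • T y + s • x = T y := huniq _ fun v =>
    (max_le_max hgauge (ENNReal.ofReal_le_ofReal hdist)).trans (hmin v)
  have hz : s • (x - T y) = 0 := by
    rw [← sub_eq_zero.2 hu]; module
  have hxT : x - T y = 0 := (smul_eq_zero.1 hz).resolve_left hs0.ne'
  rw [hxT, inner_zero_right] at hcdef
  exact hc.ne' hcdef

/-- The polar proximal map `T` of a closed gauge `κ` is firmly
quasinonexpansive: for every `y` and every fixed point `x` of `T`,
`‖T y − x‖² + ‖T y − y‖² ≤ ‖y − x‖²`. -/
theorem polarProx_firmlyQuasinonexpansive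
    (κ : WithLp 2 (X × ℝ) → ℝ≥0∞) (hκ : IsClosedGauge κ)
    (T : WithLp 2 (X × ℝ) → WithLp 2 (X × ℝ)) (hT : IsPolarProx κ T) :
    ∀ y x : WithLp 2 (X × ℝ), T x = x →
      ‖T y - x‖ ^ 2 + ‖T y - y‖ ^ 2 ≤ ‖y - x‖ ^ 2 := by
  intro y x hx
  have h := inner_polarProx_nonpos hκ hT (gauge_eq_zero_of_fixed hκ hT hx) y
  have e : y - x = (y - T y) - (x - T y) := by abel
  rw [e, norm_sub_sq_real (y - T y), norm_sub_rev (T y) x, norm_sub_rev (T y) y]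
  linarith
end
end

section
/- Let (x,1) ∈ Fix(P_S ∘ T). Then for every y ∈ X, ‖T(y,1) − (y,1)‖ ≥ ‖T(x,1) − (x,1)‖. -/
/-!
Were `κ (T z) > ‖z - T z‖`, shrinking `T z` slightly towards the origin would lower the
objective, as it strictly decreases positive finite values of `κ`. So at the minimizer
`κ (T z) ≤ ‖z - T z‖` (`gauge_le_displacement`) and the displacement `‖z - T z‖` is the optimal
value of the objective at `z`.

A fixed point means `T (x, 1) = (x, l)`, i.e. the displacement `d = |l - 1|` at `(x, 1)` is purely
vertical. If `u = T (y, 1)` had displacement `e < d`, then `κ u ≤ e` and the last coordinate of `u`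
is within `e` of `1`. Along the segment from `(x, l)` to `u`, `κ` is at most `(1 - t) d + t e < d`,
and the squared distance to `(x, 1)` is at most `(d - t (d - e))² + O(t²)`, which is below `d²` for
small `t > 0`. Such points beat the minimizer `T (x, 1)`, a contradiction.
-/

open scoped ENNReal RealInnerProductSpace Pointwise Topology
open Filter

noncomputable section

variable {X : Type*} [NormedAddCommGroup X] [InnerProductSpace ℝ X] [FiniteDimensional ℝ X]

lemma norm_sq_eq_fstE_sndE (z : WithLp 2 (X × ℝ)) :
    ‖z‖ ^ 2 = ‖fstE z‖ ^ 2 + sndE z ^ 2 := by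
  rw [WithLp.prod_norm_sq_eq_of_L2]
  simp [fstE, sndE]

/-- At the polar proximal point, the gauge value never exceeds the displacement. -/
lemma gauge_le_displacement {κ : WithLp 2 (X × ℝ) → ℝ≥0∞} (hκ : IsClosedGauge κ)
    {T : WithLp 2 (X × ℝ) → WithLp 2 (X × ℝ)} (hT : IsPolarProx κ T)
    (z : WithLp 2 (X × ℝ)) : κ (T z) ≤ ENNReal.ofReal ‖z - T z‖ := by
  by_contra! hlt
  have hzero : κ 0 = 0 := by
    have := hκ.2.2 0 le_rfl 0
    simpa using this
  have hfin : κ (T z) ≠ ∞ := by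
    have h := (le_max_left _ _).trans ((hT z).1 0)
    have h2 : polarObj κ z 0 < ∞ := by simp [polarObj, hzero]
    exact (h.trans_lt h2).ne
  have hpos : κ (T z) ≠ 0 := (bot_le.trans_lt hlt).ne'
  have hdist : ∀ᶠ s : ℝ in 𝓝[<] 1, ENNReal.ofReal ‖z - s • T z‖ < κ (T z) := by
    have hc : Continuous fun s : ℝ => ENNReal.ofReal ‖z - s • T z‖ :=
      ENNReal.continuous_ofReal.comp (by fun_prop)
    refine nhdsWithin_le_nhds (hc.continuousAt.eventually_lt continuousAt_const ?_)
    simpa using hlt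
  have hmem : ∀ᶠ s : ℝ in 𝓝[<] 1, s ∈ Set.Ioo (0 : ℝ) 1 := Ioo_mem_nhdsLT one_pos
  obtain ⟨s, hs, hs0, hs1⟩ := (hdist.and hmem).exists
  have hk : κ (s • T z) < κ (T z) := by
    rw [hκ.2.2 s hs0.le]
    calc ENNReal.ofReal s * κ (T z) < 1 * κ (T z) :=
          ENNReal.mul_lt_mul_left hpos hfin (by simpa using hs1)
      _ = κ (T z) := one_mul _
  have hmin := (le_max_left _ _).trans ((hT z).1 (s • T z))
  exact absurd hmin (not_le.mpr (max_lt hk hs))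

/-- If `(x,1) ∈ Fix (P_S ∘ T)`, then for every `y ∈ X`,
`‖T(y,1) − (y,1)‖ ≥ ‖T(x,1) − (x,1)‖`. -/
theorem fix_PS_comp_polarProx_minimizes_displacement
    (κ : WithLp 2 (X × ℝ) → ℝ≥0∞) (hκ : IsClosedGauge κ)
    (T : WithLp 2 (X × ℝ) → WithLp 2 (X × ℝ)) (hT : IsPolarProx κ T)
    (x : X) (hfix : PS (T (pt x 1)) = pt x 1) :
    ∀ y : X, ‖T (pt y 1) - pt y 1‖ ≥ ‖T (pt x 1) - pt x 1‖ := by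
  intro y
  by_contra! hlt
  have hgp := gauge_le_displacement hκ hT (pt x 1)
  have hgu := gauge_le_displacement hκ hT (pt y 1)
  have hmin := (hT (pt x 1)).1
  rw [norm_sub_rev] at hgp hgu
  set p := T (pt x 1) with hp
  set u := T (pt y 1) with hu
  set d := ‖p - pt x 1‖ with hd
  set e := ‖u - pt y 1‖ with he
  have he0 : 0 ≤ e := norm_nonneg _
  have hpx : fstE p = x := congrArg fstE hfix
  have hd_sq : d ^ 2 = (sndE p - 1) ^ 2 := by
    rw [hd, norm_sq_eq_fstE_sndE]
    have h1 : fstE (p - pt x 1) = fstE p - x := rfl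
    have h2 : sndE (p - pt x 1) = sndE p - 1 := rfl
    rw [h1, h2, hpx]; simp
  have hl : |sndE p - 1| ≤ d := abs_le_of_sq_le_sq hd_sq.ge (norm_nonneg _)
  have hm : |sndE u - 1| ≤ e := by
    refine abs_le_of_sq_le_sq ?_ he0
    rw [he, norm_sq_eq_fstE_sndE]
    have h2 : sndE (u - pt y 1) = sndE u - 1 := rfl
    rw [h2]; nlinarith [sq_nonneg ‖fstE (u - pt y 1)‖]
  set K := ‖fstE u - x‖ ^ 2 + (d - e) ^ 2 with hK
  -- `t * K < 2 * d * (d - e)` says that the squared distance bound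
  -- `t ^ 2 * ‖fstE u - x‖ ^ 2 + (d - t * (d - e)) ^ 2` is below `d ^ 2`.
  have hsmall : ∀ᶠ t : ℝ in 𝓝[>] 0, t * K < 2 * d * (d - e) := by
    have hc : Continuous fun t : ℝ => t * K := by fun_prop
    refine nhdsWithin_le_nhds (hc.continuousAt.eventually_lt continuousAt_const ?_)
    have : 0 < d * (d - e) := mul_pos (he0.trans_lt hlt) (sub_pos.mpr hlt)
    linarith
  have hmem : ∀ᶠ t : ℝ in 𝓝[>] 0, t ∈ Set.Ioo (0 : ℝ) 1 := Ioo_mem_nhdsGT one_pos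
  obtain ⟨t, ht, ht0, ht1⟩ := (hsmall.and hmem).exists
  set w := (1 - t) • p + t • u with hw
  have hkw : κ w < ENNReal.ofReal d := by
    calc κ w ≤ ENNReal.ofReal (1 - t) * κ p + ENNReal.ofReal t * κ u :=
          hκ.2.1 p u (1 - t) t (by linarith) ht0.le (by ring)
      _ ≤ ENNReal.ofReal (1 - t) * ENNReal.ofReal d + ENNReal.ofReal t * ENNReal.ofReal e := by
          gcongr
      _ = ENNReal.ofReal ((1 - t) * d + t * e) := by
          rw [← ENNReal.ofReal_mul (by linarith), ← ENNReal.ofReal_mul ht0.le,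
            ← ENNReal.ofReal_add (mul_nonneg (by linarith) (norm_nonneg _))
              (mul_nonneg ht0.le he0)]
      _ < ENNReal.ofReal d := by
          rw [ENNReal.ofReal_lt_ofReal_iff (he0.trans_lt hlt)]
          nlinarith
  have hdw : ‖pt x 1 - w‖ < d := by
    rw [norm_sub_rev]
    refine lt_of_pow_lt_pow_left₀ 2 (norm_nonneg _) ?_
    rw [norm_sq_eq_fstE_sndE]
    have h1 : fstE (w - pt x 1) = t • (fstE u - x) := by
      have : fstE (w - pt x 1) = (1 - t) • fstE p + t • fstE u - x := rfl
      rw [this, hpx]; module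
    have h2 : sndE (w - pt x 1) = (1 - t) * (sndE p - 1) + t * (sndE u - 1) := by
      have : sndE (w - pt x 1) = (1 - t) * sndE p + t * sndE u - 1 := rfl
      rw [this]; ring
    have h3 : sndE (w - pt x 1) ^ 2 ≤ (d - t * (d - e)) ^ 2 := by
      rw [h2]
      have hl' := abs_le.mp hl
      have hm' := abs_le.mp hm
      apply sq_le_sq' <;> nlinarith
    rw [h1, norm_smul, Real.norm_of_nonneg ht0.le]
    nlinarith [mul_lt_mul_of_pos_left ht ht0]
  have hval : ENNReal.ofReal d ≤ polarObj κ (pt x 1) w := by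
    refine le_trans ?_ (hmin w)
    rw [hd, norm_sub_rev]
    exact le_max_right _ _
  refine absurd hval (not_le.mpr (max_lt hkw ?_))
  exact (ENNReal.ofReal_lt_ofReal_iff (he0.trans_lt hlt)).mpr hdw
end
end

section
/- Suppose Fix(P_S ∘ T) ≠ ∅. Let y₀ ∈ S and define the iteration y_{n+1} = P_S(T y_n). Then the sequence (y_n) converges in norm to some point y ∈ Fix(P_S ∘ T). -/
/-! For `z ∈ E` put `r(z) = ‖z - T z‖`. Positive homogeneity of `κ` forces the two terms of the
objective to balance, so `r(z)` is its minimal value, and `T z` is the metric projection of `z`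
onto the convex sublevel set `{κ ≤ r(z)}` (`IsPolarProx.gauge_le`, `IsPolarProx.inner_le`).

Let `f` be a fixed point of `P_S ∘ T`, and `s = r(f)`. As `f - T f` is orthogonal to the directions
of `S`, the function `r` attains its minimum over `S` at `f` (`radius_le`). Hence for `z ∈ S` the
point `T f` lies in `{κ ≤ r(z)}`, and the projection inequality
`⟪z - T z, T f - T z⟫ ≤ 0` rearranges in coordinates to the Fejér-type estimate (`decrease`)
`‖P_S (T z) - f‖² + (r(z)² - s²) + (snd (T z) - snd (T f))² ≤ ‖z - f‖²`.

Along the iteration both extra terms therefore tend to `0`. If a subsequence of `(y_{n+1})`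
converges to `w`, then the corresponding `T y_n` converge to `u = (fst w, snd (T f))`, and lower
semicontinuity gives `κ u ≤ s`, while `‖w - u‖ = s`. Since `s ≤ r(w)`, uniqueness of the minimizer
yields `u = T w`, so `w` is a fixed point. The distances `‖y_n - w‖` decrease and have a
subsequence tending to `0`, so the whole sequence converges to `w`. -/


open scoped ENNReal RealInnerProductSpace Pointwise Topology
open Filter

noncomputable section

variable {X : Type*} [NormedAddCommGroup X] [InnerProductSpace ℝ X] [FiniteDimensional ℝ X]

set_option linter.unusedSectionVars false

@[simp] lemma fstE_pt (x : X) (t : ℝ) : fstE (pt x t) = x := rfl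

@[simp] lemma sndE_pt (x : X) (t : ℝ) : sndE (pt x t) = t := rfl

@[simp] lemma fstE_sub (z w : WithLp 2 (X × ℝ)) : fstE (z - w) = fstE z - fstE w := rfl

@[simp] lemma sndE_sub (z w : WithLp 2 (X × ℝ)) : sndE (z - w) = sndE z - sndE w := rfl

@[simp] lemma fstE_PS (z : WithLp 2 (X × ℝ)) : fstE (PS z) = fstE z := rfl

@[simp] lemma sndE_PS (z : WithLp 2 (X × ℝ)) : sndE (PS z) = 1 := rfl

lemma inner_eq_fstE_sndE (z w : WithLp 2 (X × ℝ)) :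
    ⟪z, w⟫ = ⟪fstE z, fstE w⟫ + sndE z * sndE w := by
  rw [WithLp.prod_inner_apply]
  simp [fstE, sndE, mul_comm]

lemma continuous_fstE : Continuous (fstE : WithLp 2 (X × ℝ) → X) :=
  continuous_fst.comp (WithLp.prod_continuous_ofLp 2 X ℝ)

section
variable {κ : WithLp 2 (X × ℝ) → ℝ≥0∞} {T : WithLp 2 (X × ℝ) → WithLp 2 (X × ℝ)}

/-- The distance term dominates in the optimal value: if the gauge term were strictly larger,
shrinking `T z` towards the origin would improve the objective. -/
lemma IsPolarProx.gauge_le (hκ : IsClosedGauge κ) (hT : IsPolarProx κ T)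
    (z : WithLp 2 (X × ℝ)) : κ (T z) ≤ ENNReal.ofReal ‖z - T z‖ := by
  by_contra! hlt
  have hzero : κ 0 = 0 := by simpa using hκ.2.2 0 le_rfl 0
  have hfin : κ (T z) ≠ ⊤ := by
    have h := (le_max_left _ _).trans ((hT z).1 0)
    rw [polarObj, hzero] at h
    exact ne_top_of_le_ne_top (by simp) h
  have hk : ‖z - T z‖ < (κ (T z)).toReal :=
    (ENNReal.ofReal_lt_iff_lt_toReal (norm_nonneg _) hfin).1 hlt
  have hcont : Continuous fun t : ℝ => ‖z - t • T z‖ := by fun_prop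
  have hev : ∀ᶠ t : ℝ in 𝓝[<] 1, ‖z - t • T z‖ < (κ (T z)).toReal := by
    refine ((hcont.tendsto 1).mono_left nhdsWithin_le_nhds).eventually_lt_const ?_
    simpa using hk
  have hpos : ∀ᶠ t : ℝ in 𝓝[<] 1, 0 < t :=
    (eventually_gt_nhds one_pos).filter_mono nhdsWithin_le_nhds
  obtain ⟨t, ⟨ht, ht0⟩, ht1⟩ := ((hev.and hpos).and self_mem_nhdsWithin).exists
  have hK0 : 0 < (κ (T z)).toReal := (norm_nonneg _).trans_lt hk
  have hle := (le_max_left _ _).trans ((hT z).1 (t • T z))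
  refine hle.not_gt (max_lt ?_ ?_)
  · rw [hκ.2.2 t ht0.le, ← ENNReal.ofReal_toReal hfin, ← ENNReal.ofReal_mul ht0.le]
    rw [ENNReal.ofReal_lt_ofReal_iff hK0]
    have : t < 1 := ht1
    nlinarith
  · rwa [ENNReal.ofReal_lt_iff_lt_toReal (norm_nonneg _) hfin]

/-- A point whose objective value is at most the optimal value `‖z - T z‖` is `T z`. -/
lemma IsPolarProx.eq_of_le (hT : IsPolarProx κ T)
    {z u : WithLp 2 (X × ℝ)} (h1 : κ u ≤ ENNReal.ofReal ‖z - T z‖)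
    (h2 : ‖z - u‖ ≤ ‖z - T z‖) : u = T z := by
  refine (hT z).2 u fun v => le_trans ?_ ((hT z).1 v)
  exact (max_le h1 (ENNReal.ofReal_le_ofReal h2)).trans (le_max_right _ _)

/-- Variational inequality expressing that `T z` is the projection of `z` onto the sublevel set
`{κ ≤ ‖z - T z‖}`. -/
lemma IsPolarProx.inner_le (hκ : IsClosedGauge κ) (hT : IsPolarProx κ T)
    (z : WithLp 2 (X × ℝ)) {u : WithLp 2 (X × ℝ)} (hu : κ u ≤ ENNReal.ofReal ‖z - T z‖) :
    ⟪z - T z, u - T z⟫ ≤ 0 := by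
  have hconv : Convex ℝ {u | κ u ≤ ENNReal.ofReal ‖z - T z‖} := by
    intro v hv w hw a b ha hb hab
    calc κ (a • v + b • w) ≤ ENNReal.ofReal a * κ v + ENNReal.ofReal b * κ w :=
          hκ.2.1 v w a b ha hb hab
      _ ≤ ENNReal.ofReal a * ENNReal.ofReal ‖z - T z‖
          + ENNReal.ofReal b * ENNReal.ofReal ‖z - T z‖ := by
          gcongr
          · exact hv
          · exact hw
      _ = ENNReal.ofReal ‖z - T z‖ := by
          rw [← add_mul, ← ENNReal.ofReal_add ha hb, hab, ENNReal.ofReal_one, one_mul]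
  have hmem : T z ∈ {u | κ u ≤ ENNReal.ofReal ‖z - T z‖} := hT.gauge_le hκ z
  refine (norm_eq_iInf_iff_real_inner_le_zero hconv hmem).1 ?_ u hu
  have : Nonempty {u | κ u ≤ ENNReal.ofReal ‖z - T z‖} := ⟨⟨_, hmem⟩⟩
  refine le_antisymm (le_ciInf fun w => ?_) ?_
  · by_contra! h
    rw [hT.eq_of_le w.2 h.le] at h
    exact h.false
  · exact ciInf_le (f := fun w : {u | κ u ≤ ENNReal.ofReal ‖z - T z‖} => ‖z - w‖)
      ⟨0, by rintro _ ⟨w, rfl⟩; exact norm_nonneg _⟩ ⟨_, hmem⟩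

/-- A fixed point of `P_S ∘ T` minimizes the radius `z ↦ ‖z - T z‖` over `S`. -/
lemma radius_le (hκ : IsClosedGauge κ) (hT : IsPolarProx κ T)
    {f z : WithLp 2 (X × ℝ)} (hf : PS (T f) = f) (hz : sndE z = 1) :
    ‖f - T f‖ ≤ ‖z - T z‖ := by
  by_contra! hlt
  have hp : κ (T z) ≤ ENNReal.ofReal ‖f - T f‖ :=
    (hT.gauge_le hκ z).trans (ENNReal.ofReal_le_ofReal hlt.le)
  have h1 := hT.inner_le hκ f hp
  have hf1 : fstE f = fstE (T f) := by rw [← fstE_PS (T f), hf]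
  have hf2 : sndE f = 1 := by rw [← hf, sndE_PS]
  -- `f - T f` is vertical, hence orthogonal to `z - f`.
  have h2 : ⟪f - T f, z - f⟫ = 0 := by
    rw [inner_eq_fstE_sndE]
    simp [hf1, hf2, hz]
  have h3 : ⟪f - T f, T z - T f⟫
      = ⟪f - T f, f - T f⟫ + ⟪f - T f, z - f⟫ - ⟪f - T f, z - T z⟫ := by
    rw [← inner_add_right, ← inner_sub_right]
    congr 1
    abel
  rw [h2, real_inner_self_eq_norm_sq] at h3
  have h4 := real_inner_le_norm (f - T f) (z - T z)
  nlinarith [norm_nonneg (f - T f), norm_nonneg (z - T z)]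

/-- Quantitative Fejér estimate for one step of the iteration. -/
lemma decrease (hκ : IsClosedGauge κ) (hT : IsPolarProx κ T)
    {f z : WithLp 2 (X × ℝ)} (hf : PS (T f) = f) (hz : sndE z = 1) :
    ‖PS (T z) - f‖ ^ 2 + (‖z - T z‖ ^ 2 - ‖f - T f‖ ^ 2) + (sndE (T z) - sndE (T f)) ^ 2
      ≤ ‖z - f‖ ^ 2 := by
  have hq : κ (T f) ≤ ENNReal.ofReal ‖z - T z‖ :=
    (hT.gauge_le hκ f).trans (ENNReal.ofReal_le_ofReal (radius_le hκ hT hf hz))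
  have h1 := hT.inner_le hκ z hq
  have hf1 : fstE f = fstE (T f) := by rw [← fstE_PS (T f), hf]
  have hf2 : sndE f = 1 := by rw [← hf, sndE_PS]
  rw [inner_eq_fstE_sndE] at h1
  simp only [norm_sq_eq_fstE_sndE, fstE_sub, sndE_sub, fstE_PS, sndE_PS, hf1, hf2, hz] at h1 ⊢
  have h2 : fstE z - fstE (T f) = (fstE z - fstE (T z)) - (fstE (T f) - fstE (T z)) := by abel
  have h3 : ‖fstE (T z) - fstE (T f)‖ = ‖fstE (T f) - fstE (T z)‖ := norm_sub_rev _ _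
  rw [h2, h3, norm_sub_sq_real (fstE z - fstE (T z)), sub_self (fstE (T f)), norm_zero]
  nlinarith

lemma antitone_norm_sub (hκ : IsClosedGauge κ) (hT : IsPolarProx κ T)
    {y : ℕ → WithLp 2 (X × ℝ)} (hy : ∀ n, sndE (y n) = 1) (hrec : ∀ n, y (n + 1) = PS (T (y n)))
    {f : WithLp 2 (X × ℝ)} (hf : PS (T f) = f) : Antitone fun n => ‖y n - f‖ := by
  refine antitone_nat_of_succ_le fun n => ?_
  have h := decrease hκ hT hf (hy n)
  rw [← hrec] at h
  have h2 := radius_le hκ hT hf (hy n)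
  refine le_of_sq_le_sq ?_ (norm_nonneg _)
  nlinarith [norm_nonneg (f - T f), sq_nonneg (sndE (T (y n)) - sndE (T f))]

end

/-- If `Fix (P_S ∘ T) ≠ ∅` and `y₀ ∈ S`, the iteration
`y_{n+1} = P_S (T y_n)` converges in norm to a point of `Fix (P_S ∘ T)`. -/
theorem GP4A_converges
    (κ : WithLp 2 (X × ℝ) → ℝ≥0∞) (hκ : IsClosedGauge κ)
    (T : WithLp 2 (X × ℝ) → WithLp 2 (X × ℝ)) (hT : IsPolarProx κ T)
    (hne : ∃ z, PS (T z) = z)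
    (y : ℕ → WithLp 2 (X × ℝ)) (hy0 : sndE (y 0) = 1)
    (hrec : ∀ n, y (n + 1) = PS (T (y n))) :
    ∃ ylim : WithLp 2 (X × ℝ), PS (T ylim) = ylim ∧ Tendsto y atTop (𝓝 ylim) := by
  obtain ⟨f, hf⟩ := hne
  have hy : ∀ n, sndE (y n) = 1 := by
    rintro (_ | n)
    · exact hy0
    · rw [hrec, sndE_PS]
  have hdec := fun n => decrease hκ hT hf (hy n)
  have hrad := fun n => radius_le hκ hT hf (hy n)
  have hanti := antitone_norm_sub hκ hT hy hrec hf
  have hgap : Tendsto (fun n => ‖y n - f‖ ^ 2 - ‖y (n + 1) - f‖ ^ 2) atTop (𝓝 0) := by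
    have hlim := (tendsto_atTop_ciInf hanti ⟨0, by rintro _ ⟨n, rfl⟩; exact norm_nonneg _⟩).pow 2
    simpa using hlim.sub ((tendsto_add_atTop_iff_nat 1).2 hlim)
  have hsq : ∀ n, 0 ≤ ‖y n - T (y n)‖ ^ 2 - ‖f - T f‖ ^ 2 := fun n => by
    nlinarith [hrad n, norm_nonneg (f - T f)]
  have hr : Tendsto (fun n => ‖y n - T (y n)‖) atTop (𝓝 ‖f - T f‖) := by
    have h : Tendsto (fun n => ‖y n - T (y n)‖ ^ 2 - ‖f - T f‖ ^ 2) atTop (𝓝 0) := by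
      refine squeeze_zero hsq (fun n => ?_) hgap
      have := hdec n
      rw [← hrec] at this
      nlinarith [sq_nonneg (sndE (T (y n)) - sndE (T f))]
    have h2 := (h.add_const (‖f - T f‖ ^ 2)).sqrt
    simp only [sub_add_cancel, zero_add, Real.sqrt_sq (norm_nonneg _)] at h2
    exact h2
  have hs : Tendsto (fun n => sndE (T (y n))) atTop (𝓝 (sndE (T f))) := by
    have h : Tendsto (fun n => (sndE (T (y n)) - sndE (T f)) ^ 2) atTop (𝓝 0) := by
      refine squeeze_zero (fun n => sq_nonneg _) (fun n => ?_) hgap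
      have := hdec n
      rw [← hrec] at this
      linarith [hsq n]
    have h' := h.sqrt
    simp only [Real.sqrt_sq_eq_abs, Real.sqrt_zero] at h'
    exact tendsto_sub_nhds_zero_iff.1 ((tendsto_zero_iff_abs_tendsto_zero _).2 h')
  have : ProperSpace (WithLp 2 (X × ℝ)) := FiniteDimensional.proper ℝ _
  obtain ⟨w, -, φ, hφ, hw⟩ := (isCompact_closedBall f ‖y 0 - f‖).tendsto_subseq
    (x := fun n => y (n + 1)) fun n => by
      rw [mem_closedBall_iff_norm]
      exact hanti (Nat.zero_le _)
  have hfst : Tendsto (fun n => fstE (T (y (φ n)))) atTop (𝓝 (fstE w)) := by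
    refine ((continuous_fstE.tendsto w).comp hw).congr fun n => ?_
    simp [hrec]
  have hw1 : sndE w = 1 := by
    have hc : Continuous (sndE : WithLp 2 (X × ℝ) → ℝ) :=
      continuous_snd.comp (WithLp.prod_continuous_ofLp 2 X ℝ)
    refine tendsto_nhds_unique ((hc.tendsto w).comp hw) ?_
    exact tendsto_const_nhds.congr fun n => (hy _).symm
  have hu : Tendsto (fun n => T (y (φ n))) atTop (𝓝 (pt (fstE w) (sndE (T f)))) :=
    ((WithLp.prod_continuous_toLp 2 X ℝ).tendsto _).comp
      (hfst.prodMk_nhds (hs.comp hφ.tendsto_atTop))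
  have hκu : κ (pt (fstE w) (sndE (T f))) ≤ ENNReal.ofReal ‖f - T f‖ := by
    by_contra! hlt
    obtain ⟨c, hc1, hc2⟩ := exists_between hlt
    have h1 := hu.eventually (hκ.1 _ c hc2)
    have h2 := (ENNReal.tendsto_ofReal (hr.comp hφ.tendsto_atTop)).eventually_lt_const hc1
    obtain ⟨n, hn1, hn2⟩ := (h1.and h2).exists
    exact (hn1.trans_le (hT.gauge_le hκ _)).not_gt hn2
  have hrw := radius_le hκ hT hf hw1
  have hdist : ‖w - pt (fstE w) (sndE (T f))‖ = ‖f - T f‖ := by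
    have hf1 : fstE f = fstE (T f) := by rw [← fstE_PS (T f), hf]
    have hf2 : sndE f = 1 := by rw [← hf, sndE_PS]
    rw [← sq_eq_sq₀ (norm_nonneg _) (norm_nonneg _), norm_sq_eq_fstE_sndE, norm_sq_eq_fstE_sndE]
    simp [hf1, hf2, hw1]
  have hTw : pt (fstE w) (sndE (T f)) = T w :=
    hT.eq_of_le (hκu.trans (ENNReal.ofReal_le_ofReal hrw)) (hdist.trans_le hrw)
  have hfix : PS (T w) = w := by
    rw [← hTw]
    change pt (fstE w) 1 = w
    rw [← hw1]
    rfl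
  refine ⟨w, hfix, ?_⟩
  have hantiw := antitone_norm_sub hκ hT hy hrec hfix
  rw [tendsto_iff_norm_sub_tendsto_zero] at hw ⊢
  -- A bounded monotone sequence has the same limit as any of its subsequences.
  have hlim := tendsto_atTop_ciInf hantiw ⟨0, by rintro _ ⟨n, rfl⟩; exact norm_nonneg _⟩
  have hsub := hlim.comp ((tendsto_add_atTop_nat 1).comp hφ.tendsto_atTop)
  rwa [tendsto_nhds_unique hsub hw] at hlim
end
end

section
/- Suppose the set {λ ∈ ℝ : ∃ y ∈ X, (y,λ) ∈ D} has a maximum λ' ≥ 0 (for example, this holds whenever D is bounded), and let F = D ∩ (X × {λ'}). Then: (a) Fix(P_S ∘ T) is nonempty and the dilated face (1/(1+λ'))·F equals the image T(Fix(P_S ∘ T)) of Fix(P_S ∘ T) under T; (b) every (x,1) ∈ Fix(P_S ∘ T) satisfies T(x,1) = (x, λ'/(1+λ')). -/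
/-! Write `r = 1 / (1 + lam')`. Homogeneity turns the definition of `lam'` into the inequality
`sndE u ≤ a * lam'` whenever `κ u ≤ a` (`sndE_le`). As the height of `u` is also at least
`1 - ‖(x,1) - u‖`, the value of the problem defining `T (x,1)` is at least `r` for every `x`,
and a point `(x, t)` of value at most `r` must have `t = lam' * r` and lie in `r • F`
(`value_ge`, `face_of_value_le`).

If `(y, lam') ∈ F`, the point `r • (y, lam')` attains the value `r` at `(r • y, 1)`, so it is
`T (r • y, 1)`, and `(r • y, 1)` is a fixed point. Conversely, let `T (x,1) = (x,t)` have value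
`m > r`. Both `κ (x,t)` and the vertical distance from `(x,t)` to `(x,1)` are at most `m`; moving
from `(x,t)` towards a point of `r • F` lowers these bounds at first order, while the horizontal
distance enters only at second order, so the value drops below `m`, contradicting minimality (`value_le_of_fixed`). Hence `m = r`. -/


open scoped ENNReal RealInnerProductSpace Pointwise Topology
open Filter

noncomputable section

variable {X : Type*} [NormedAddCommGroup X] [InnerProductSpace ℝ X] [FiniteDimensional ℝ X]

lemma eta_pt (z : WithLp 2 (X × ℝ)) : z = pt (fstE z) (sndE z) := rfl

lemma PS_pt (x : X) (t : ℝ) : PS (pt x t) = pt x 1 := rfl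

lemma smul_pt (a : ℝ) (x : X) (t : ℝ) : a • pt x t = pt (a • x) (a * t) := rfl

lemma add_pt (x y : X) (s t : ℝ) : pt x s + pt y t = pt (x + y) (s + t) := rfl

lemma sub_pt (x y : X) (s t : ℝ) : pt x s - pt y t = pt (x - y) (s - t) := rfl

lemma norm_pt_sq (x : X) (t : ℝ) : ‖pt x t‖ ^ 2 = ‖x‖ ^ 2 + t ^ 2 := by
  rw [WithLp.prod_norm_sq_eq_of_L2]
  simp [pt]

lemma norm_vert (x : X) (s t : ℝ) : ‖pt x s - pt x t‖ = |s - t| := by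
  rw [sub_pt, ← abs_of_nonneg (norm_nonneg _), ← sq_eq_sq_iff_abs_eq_abs, norm_pt_sq]
  simp

lemma polarObj_le_iff {κ : WithLp 2 (X × ℝ) → ℝ≥0∞} {z u : WithLp 2 (X × ℝ)} {a : ℝ}
    (ha : 0 ≤ a) :
    polarObj κ z u ≤ ENNReal.ofReal a ↔ κ u ≤ ENNReal.ofReal a ∧ ‖z - u‖ ≤ a := by
  rw [polarObj, max_le_iff, ENNReal.ofReal_le_ofReal_iff ha]

lemma gauge_smul_le {κ : WithLp 2 (X × ℝ) → ℝ≥0∞} (hκ : IsClosedGauge κ)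
    {u : WithLp 2 (X × ℝ)} {a t : ℝ} (ht : 0 ≤ t) (hu : κ u ≤ ENNReal.ofReal a) :
    κ (t • u) ≤ ENNReal.ofReal (t * a) := by
  rw [hκ.2.2 t ht, ENNReal.ofReal_mul ht]
  gcongr

/-- By homogeneity, the height bound `lam'` on `D` scales to all sublevel sets of `κ`. -/
lemma sndE_le {κ : WithLp 2 (X × ℝ) → ℝ≥0∞} (hκ : IsClosedGauge κ) {lam' : ℝ}
    (hmax : IsGreatest {lam : ℝ | ∃ y : X, κ (pt y lam) ≤ 1} lam')
    {x : X} {t a : ℝ} (ha : 0 ≤ a) (hu : κ (pt x t) ≤ ENNReal.ofReal a) :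
    t ≤ a * lam' := by
  have key : ∀ s : ℝ, 0 ≤ s → s * a ≤ 1 → s * t ≤ lam' := fun s hs hsa ↦
    hmax.2 ⟨s • x, (gauge_smul_le hκ hs hu).trans (ENNReal.ofReal_le_one.2 hsa)⟩
  rcases ha.eq_or_lt with rfl | ha
  · by_contra! h
    have ht : 0 < t := by linarith
    -- A point with `κ = 0` and positive height has dilates in `D` of arbitrary height.
    have := key ((|lam'| + 1) / t) (by positivity) (by simp)
    rw [div_mul_cancel₀ _ ht.ne'] at this
    linarith [le_abs_self lam']
  · have := key a⁻¹ (by positivity) (inv_mul_cancel₀ ha.ne').le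
    rwa [inv_mul_le_iff₀ ha] at this

/-- A point `u` of value `m` has height between `1 - m` and `m * lam'`, so `m` is at least `r`. -/
lemma value_ge {κ : WithLp 2 (X × ℝ) → ℝ≥0∞} (hκ : IsClosedGauge κ) {lam' : ℝ}
    (hmax : IsGreatest {lam : ℝ | ∃ y : X, κ (pt y lam) ≤ 1} lam') (hlam' : 0 ≤ lam')
    (x : X) (u : WithLp 2 (X × ℝ)) :
    ENNReal.ofReal (1 / (1 + lam')) ≤ polarObj κ (pt x 1) u := by
  obtain h | h := eq_or_ne (polarObj κ (pt x 1) u) ⊤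
  · simp [h]
  rw [← ENNReal.ofReal_toReal h]
  set m := (polarObj κ (pt x 1) u).toReal with hm
  have hm0 : 0 ≤ m := ENNReal.toReal_nonneg
  obtain ⟨h1, h2⟩ := (polarObj_le_iff hm0).1 (ENNReal.ofReal_toReal h).ge
  have h3 : sndE u ≤ m * lam' := sndE_le (x := fstE u) hκ hmax hm0 h1
  have h4 : ‖pt x 1 - u‖ ^ 2 = ‖x - fstE u‖ ^ 2 + (1 - sndE u) ^ 2 :=
    norm_pt_sq (x - fstE u) (1 - sndE u)
  have h5 : 1 - sndE u ≤ ‖pt x 1 - u‖ :=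
    le_of_abs_le (abs_le_of_sq_le_sq (by rw [h4]; linarith [sq_nonneg ‖x - fstE u‖]) (norm_nonneg _))
  apply ENNReal.ofReal_le_ofReal
  rw [div_le_iff₀ (by positivity)]
  linarith

/-- Points of optimal value `r` have height `lam' * r`, and dilate into `D`. -/
lemma face_of_value_le {κ : WithLp 2 (X × ℝ) → ℝ≥0∞} (hκ : IsClosedGauge κ) {lam' : ℝ}
    (hmax : IsGreatest {lam : ℝ | ∃ y : X, κ (pt y lam) ≤ 1} lam') (hlam' : 0 ≤ lam')
    {x : X} {t : ℝ}
    (h : polarObj κ (pt x 1) (pt x t) ≤ ENNReal.ofReal (1 / (1 + lam'))) :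
    t = lam' / (1 + lam') ∧ κ ((1 + lam') • pt x t) ≤ 1 := by
  have hpos : 0 < 1 + lam' := by positivity
  obtain ⟨h1, h2⟩ := (polarObj_le_iff (by positivity)).1 h
  have h3 := sndE_le hκ hmax (by positivity) h1
  rw [norm_vert] at h2
  have h4 := (le_abs_self _).trans h2
  have h5 : 1 / (1 + lam') + lam' / (1 + lam') = 1 := by field_simp
  refine ⟨le_antisymm (h3.trans_eq (by ring)) (by linarith), ?_⟩
  have := gauge_smul_le hκ hpos.le h1
  rwa [mul_one_div_cancel hpos.ne', ENNReal.ofReal_one] at this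

/-- The points `r • z`, `z ∈ F`, are the values of `T` at the points above them in `S`. -/
lemma prox_of_face {κ : WithLp 2 (X × ℝ) → ℝ≥0∞} (hκ : IsClosedGauge κ)
    {T : WithLp 2 (X × ℝ) → WithLp 2 (X × ℝ)} (hT : IsPolarProx κ T) {lam' : ℝ}
    (hmax : IsGreatest {lam : ℝ | ∃ y : X, κ (pt y lam) ≤ 1} lam') (hlam' : 0 ≤ lam')
    {y : X} (hy : κ (pt y lam') ≤ 1) :
    T (pt ((1 / (1 + lam')) • y) 1) = (1 / (1 + lam')) • pt y lam' := by
  refine ((hT _).2 _ fun v ↦ le_trans ?_ (value_ge hκ hmax hlam' _ v)).symm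
  have hpos : 0 < 1 + lam' := by positivity
  rw [polarObj_le_iff (by positivity)]
  constructor
  · simpa using gauge_smul_le (a := 1) hκ (t := 1 / (1 + lam')) (by positivity) (by simpa using hy)
  · rw [smul_pt, norm_vert,
      show 1 - 1 / (1 + lam') * lam' = 1 / (1 + lam') by field_simp; ring,
      abs_of_nonneg (by positivity)]

/-- The value at a fixed point `(x,1)` is at most `r`: otherwise a small step from `(x,t)` towards
a point of `r • F` lowers it. -/
lemma value_le_of_fixed {κ : WithLp 2 (X × ℝ) → ℝ≥0∞} (hκ : IsClosedGauge κ) {lam' : ℝ}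
    (hlam' : 0 ≤ lam') {y : X} (hy : κ (pt y lam') ≤ 1) {x : X} {t : ℝ}
    (hmin : ∀ v, polarObj κ (pt x 1) (pt x t) ≤ polarObj κ (pt x 1) v) :
    polarObj κ (pt x 1) (pt x t) ≤ ENNReal.ofReal (1 / (1 + lam')) := by
  have hκ0 : κ 0 = 0 := by simpa using hκ.2.2 0 le_rfl 0
  have hfin : polarObj κ (pt x 1) (pt x t) ≠ ⊤ :=
    ne_top_of_le_ne_top (by simp [polarObj, hκ0]) (hmin 0)
  set m := (polarObj κ (pt x 1) (pt x t)).toReal with hm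
  have hm0 : 0 ≤ m := ENNReal.toReal_nonneg
  have hmeq : polarObj κ (pt x 1) (pt x t) = ENNReal.ofReal m := (ENNReal.ofReal_toReal hfin).symm
  obtain ⟨h1, h2⟩ := (polarObj_le_iff hm0).1 hmeq.le
  rw [norm_vert] at h2
  have hpos : 0 < 1 + lam' := by positivity
  set r := 1 / (1 + lam') with hr
  have hr0 : 0 < r := by positivity
  have hrl : r * lam' = 1 - r := by rw [hr]; field_simp; ring
  rw [hmeq]
  apply ENNReal.ofReal_le_ofReal
  by_contra! hlt
  set d := m - r with hd
  have hd0 : 0 < d := by linarith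
  have hmpos : 0 < m := by linarith
  set A := ‖x - r • y‖ ^ 2 with hA
  have hA0 : 0 ≤ A := by positivity
  -- The squared distance after a step `s` is at most `m² - 2 s m d + s² (A + d²)`.
  obtain ⟨s, hs0, hs1, hs⟩ : ∃ s : ℝ, 0 < s ∧ s < 1 ∧ s * (A + d ^ 2) < 2 * (m * d) := by
    have hmd : 0 < m * d := by positivity
    have hden : 0 < A + d ^ 2 + m * d := by positivity
    refine ⟨m * d / (A + d ^ 2 + m * d), by positivity, ?_, ?_⟩
    · rw [div_lt_one hden]
      nlinarith
    · rw [div_mul_eq_mul_div, div_lt_iff₀ hden]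
      nlinarith [mul_pos hmd hmd, mul_nonneg hmd.le hA0, mul_nonneg hmd.le (sq_nonneg d)]
  have hw : κ (r • pt y lam') ≤ ENNReal.ofReal r := by
    simpa using gauge_smul_le (a := 1) hκ hr0.le (by simpa using hy)
  set v := (1 - s) • pt x t + s • (r • pt y lam') with hv
  have hκv : κ v ≤ ENNReal.ofReal (m - s * d) := by
    refine (hκ.2.1 _ _ _ _ (by linarith) hs0.le (by ring)).trans ?_
    calc _ ≤ ENNReal.ofReal (1 - s) * ENNReal.ofReal m
          + ENNReal.ofReal s * ENNReal.ofReal r := by gcongr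
      _ = ENNReal.ofReal (m - s * d) := by
        rw [← ENNReal.ofReal_mul (by linarith), ← ENNReal.ofReal_mul hs0.le,
          ← ENNReal.ofReal_add (mul_nonneg (by linarith) hm0) (by positivity)]
        congr 1
        rw [hd]; ring
  have hdist : ‖pt x 1 - v‖ ^ 2 = s ^ 2 * A + ((1 - s) * (1 - t) + s * r) ^ 2 := by
    have : pt x 1 - v = pt (s • (x - r • y)) ((1 - s) * (1 - t) + s * r) := by
      rw [hv, smul_pt, smul_pt, smul_pt, add_pt, sub_pt, hrl]
      congr 1
      · module
      · ring
    rw [this, norm_pt_sq, norm_smul, mul_pow, Real.norm_eq_abs, sq_abs]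
  have hvert : ((1 - s) * (1 - t) + s * r) ^ 2 ≤ (m - s * d) ^ 2 := by
    have hb := abs_le.1 h2
    apply sq_le_sq'
    · nlinarith [mul_le_mul_of_nonneg_left hb.1 (by linarith : 0 ≤ 1 - s), mul_pos hs0 hr0]
    · nlinarith [mul_le_mul_of_nonneg_left hb.2 (by linarith : 0 ≤ 1 - s)]
  have hnorm : ‖pt x 1 - v‖ < m := by
    apply lt_of_pow_lt_pow_left₀ 2 hm0
    nlinarith [mul_lt_mul_of_pos_left hs hs0]
  have hlt' : polarObj κ (pt x 1) v < ENNReal.ofReal m := by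
    refine max_lt (hκv.trans_lt ?_) ?_
    · rw [ENNReal.ofReal_lt_ofReal_iff hmpos]
      linarith [mul_pos hs0 hd0]
    · rwa [ENNReal.ofReal_lt_ofReal_iff hmpos]
  exact absurd (hmin v) (by rw [hmeq]; exact hlt'.not_ge)

/-- If `{λ : ∃ y, (y,λ) ∈ D}` has a maximum `lam' ≥ 0` and
`F = D ∩ (X × {lam'})`, then `Fix (P_S ∘ T)` is nonempty,
`(1/(1+lam')) • F = T '' Fix (P_S ∘ T)`, and every `(x,1) ∈ Fix (P_S ∘ T)`
satisfies `T(x,1) = (x, lam'/(1+lam'))`. -/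
theorem GP4A_fixedPoints_exposedFace
    (κ : WithLp 2 (X × ℝ) → ℝ≥0∞) (hκ : IsClosedGauge κ)
    (T : WithLp 2 (X × ℝ) → WithLp 2 (X × ℝ)) (hT : IsPolarProx κ T)
    (lam' : ℝ) (hmax : IsGreatest {lam : ℝ | ∃ y : X, κ (pt y lam) ≤ 1} lam')
    (hlam' : 0 ≤ lam') :
    Set.Nonempty {z : WithLp 2 (X × ℝ) | PS (T z) = z} ∧
    (1 / (1 + lam')) • ({z : WithLp 2 (X × ℝ) | κ z ≤ 1} ∩ {z | sndE z = lam'}) =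
      T '' {z : WithLp 2 (X × ℝ) | PS (T z) = z} ∧
    ∀ x : X, PS (T (pt x 1)) = pt x 1 → T (pt x 1) = pt x (lam' / (1 + lam')) := by
  have hpos : 0 < 1 + lam' := by positivity
  obtain ⟨y₀, hy₀⟩ := hmax.1
  have face : ∀ y : X, κ (pt y lam') ≤ 1 →
      PS (T (pt ((1 / (1 + lam')) • y) 1)) = pt ((1 / (1 + lam')) • y) 1 := fun y hy ↦ by
    rw [prox_of_face hκ hT hmax hlam' hy, smul_pt, PS_pt]
  have fixed : ∀ x : X, PS (T (pt x 1)) = pt x 1 →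
      T (pt x 1) = pt x (lam' / (1 + lam')) ∧ κ ((1 + lam') • T (pt x 1)) ≤ 1 := by
    intro x hx
    have hx1 : fstE (T (pt x 1)) = x := congrArg fstE hx
    obtain ⟨t, ht⟩ : ∃ t, T (pt x 1) = pt x t :=
      ⟨sndE (T (pt x 1)), (eta_pt _).trans (congrArg (pt · _) hx1)⟩
    have hmin := (hT (pt x 1)).1
    rw [ht] at hmin ⊢
    obtain ⟨h1, h2⟩ :=
      face_of_value_le hκ hmax hlam' (value_le_of_fixed hκ hlam' hy₀ hmin)
    exact ⟨by rw [← h1], h2⟩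
  refine ⟨⟨_, face y₀ hy₀⟩, Set.Subset.antisymm ?_ ?_, fun x hx ↦ (fixed x hx).1⟩
  · rintro _ ⟨z, ⟨hz, hzl⟩, rfl⟩
    obtain ⟨y, rfl⟩ : ∃ y, z = pt y lam' :=
      ⟨fstE z, (eta_pt z).trans (congrArg (pt _) hzl)⟩
    exact ⟨_, face _ hz, prox_of_face hκ hT hmax hlam' hz⟩
  · rintro _ ⟨z, hz, rfl⟩
    obtain ⟨x, rfl⟩ : ∃ x, z = pt x 1 := ⟨_, (show PS (T z) = z from hz).symm⟩
    obtain ⟨h1, h2⟩ := fixed x hz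
    refine ⟨(1 + lam') • T (pt x 1), ⟨h2, ?_⟩, ?_⟩
    · rw [h1]
      change (1 + lam') * (lam' / (1 + lam')) = lam'
      field_simp
    · change (1 / (1 + lam')) • (1 + lam') • T (pt x 1) = T (pt x 1)
      rw [smul_smul, one_div_mul_cancel hpos.ne', one_smul]
end
end
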